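/- With the trinomial-curve notation, for all integers i and j one has |N_{ij}| ≤ k·√q. -/

import Mathlib

/-!
Write `m = q - 1` and let `χ, ψ` range over the complex multiplicative characters of `F`.
After division by `x ^ a31 * y ^ a32` the curve becomes `P + Q = 1` with
`P = ρ ^ i * x ^ b11 * y ^ b12` and `Q = ρ ^ j * x ^ b21 * y ^ b22`. Detecting `P` and `Q` by
orthogonality of characters and then summing over `x, y` gives (`card_curve`)
`|C*| = ∑ χ⁻¹(ρ ^ i) * ψ⁻¹(ρ ^ j) * J(χ, ψ)`, the sum being over the group `K` of pairs with
`χ ^ b11 * ψ ^ b21 = 1` and `χ ^ b12 * ψ ^ b22 = 1`, where `J` is the Jacobi sum.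

The degenerate Jacobi sums (`χ = 1`, `ψ = 1` or `χ * ψ = 1`) are explicit. On `K` they run over
characters of order dividing `e`, `d`, `f` respectively, so they contribute exactly
`q + 1 - D_d(i) - D_e(j) - D_f(i - j + w)` (`card_curve_eq`). Hence `N_{ij}` is the sum over the
nondegenerate pairs, whose Jacobi sums have absolute value `√q`, and `|N_{ij}| ≤ |K| √q`.

It remains to see `|K| ≤ k`. The group `K` is the kernel of an endomorphism of `A × A` with `A`
cyclic of order `m`, so `|K|` is the index of its range. Pulled back to `ℤ²`, this range is a
lattice containing `(b11, b12)`, `(b21, b22)`, `(m, 0)`, `(0, m)`. Its index divides the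
determinant of any two of these vectors, and the gcd of these determinants is `k`
(`card_ker_dvd_gcd`).
-/

/-! ### The order of the group of character pairs -/

/-- The index of a subgroup of `ℤ²` divides the determinant of any two of its elements, because
two independent elements span a sublattice whose index is the absolute value of the determinant. -/
theorem index_dvd_natAbs_det (H : AddSubgroup (Fin 2 → ℤ)) {a b c d : ℤ}
    (h₁ : ![a, b] ∈ H) (h₂ : ![c, d] ∈ H) : (H.index : ℤ) ∣ a * d - b * c := by
  set M : Matrix (Fin 2) (Fin 2) ℤ := !![a, c; b, d]
  have hM : M.det = a * d - b * c := by simp [M, Matrix.det_fin_two]; ring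
  rw [← hM]
  by_cases h0 : M.det = 0
  · simp [h0]
  have hinj : Function.Injective M.mulVecLin := by
    rw [← LinearMap.ker_eq_bot, LinearMap.ker_eq_bot']
    intro v hv
    exact Matrix.eq_zero_of_mulVec_eq_zero h0 (by simpa using hv)
  have hcard := Submodule.natAbs_det_equiv (LinearMap.range M.mulVecLin)
    (LinearEquiv.ofInjective M.mulVecLin hinj)
  have hcomp : (LinearMap.range M.mulVecLin).subtype ∘ₗ
      (AddMonoidHom.toIntLinearMap
        ((LinearEquiv.ofInjective M.mulVecLin hinj : (Fin 2 → ℤ) →+ _))) = M.mulVecLin := by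
    ext; rfl
  rw [hcomp, ← Matrix.toLin'_apply', LinearMap.det_toLin'] at hcard
  have hle : (LinearMap.range M.mulVecLin).toAddSubgroup ≤ H := by
    rintro _ ⟨v, rfl⟩
    have : M.mulVecLin v = v 0 • ![a, b] + v 1 • ![c, d] := by
      ext i; fin_cases i <;> simp [M, Matrix.mulVec, dotProduct, Fin.sum_univ_two] <;> ring
    rw [this]
    exact H.add_mem (H.zsmul_mem h₁ _) (H.zsmul_mem h₂ _)
  have hdvd := AddSubgroup.index_dvd_of_le hle
  have : (LinearMap.range M.mulVecLin).toAddSubgroup.index = M.det.natAbs := hcard.symm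
  rw [this] at hdvd
  exact Int.natCast_dvd.mpr hdvd

/-- The endomorphism `(x, y) ↦ (x ^ a * y ^ b, x ^ c * y ^ d)` of `A × A`. With
`(a, b, c, d) = (b11, b21, b12, b22)` and `A` the group of characters, it is the dual of
`(x, y) ↦ (x ^ b11 * y ^ b12, x ^ b21 * y ^ b22)`. -/
def pairHom (A : Type*) [CommGroup A] (a b c d : ℤ) : A × A →* A × A where
  toFun z := (z.1 ^ a * z.2 ^ b, z.1 ^ c * z.2 ^ d)
  map_one' := by simp
  map_mul' x y := by
    simp only [Prod.fst_mul, Prod.snd_mul, mul_zpow, Prod.mk_mul_mk, Prod.mk.injEq]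
    constructor <;> exact mul_mul_mul_comm _ _ _ _

/-- The order of the kernel divides all `2 × 2` minors of the `4 × 2` matrix with rows
`(b11, b12)`, `(b21, b22)`, `(m, 0)`, `(0, m)`. -/
theorem card_ker_dvd {A : Type*} [CommGroup A] [Finite A] [IsCyclic A]
    (b11 b12 b21 b22 : ℤ) :
    let K : ℤ := Nat.card (pairHom A b11 b21 b12 b22).ker
    let m : ℤ := Nat.card A
    K ∣ b11 * b22 - b12 * b21 ∧ K ∣ m * b11 ∧ K ∣ m * b12 ∧ K ∣ m * b21 ∧ K ∣ m * b22 ∧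
      K ∣ m * m := by
  obtain ⟨g, hg⟩ := IsCyclic.exists_generator (α := A)
  let π : (Fin 2 → ℤ) →+ Additive (A × A) :=
    { toFun := fun v => Additive.ofMul (g ^ v 0, g ^ v 1)
      map_zero' := by simp
      map_add' := fun x y => by simp only [Pi.add_apply, zpow_add]; rfl }
  have hπ : Function.Surjective π := by
    intro z
    obtain ⟨s, hs⟩ := hg z.toMul.1
    obtain ⟨t, ht⟩ := hg z.toMul.2
    refine ⟨![s, t], ?_⟩
    change (g ^ s, g ^ t) = z.toMul
    exact Prod.ext hs ht
  set h := pairHom A b11 b21 b12 b22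
  let H := (Subgroup.toAddSubgroup h.range).comap π
  have hidx : H.index = Nat.card h.ker := by
    rw [AddSubgroup.index_comap_of_surjective _ hπ, ← Subgroup.index_range]
    rfl
  have mem (s t : ℤ) : ![s, t] ∈ H ↔ (g ^ s, g ^ t) ∈ h.range := Iff.rfl
  have m1 : ![b11, b12] ∈ H := (mem _ _).2 ⟨(g, 1), by simp [h, pairHom]⟩
  have m2 : ![b21, b22] ∈ H := (mem _ _).2 ⟨(1, g), by simp [h, pairHom]⟩
  have m3 : ![(Nat.card A : ℤ), 0] ∈ H := (mem _ _).2 ⟨1, by simp [Prod.ext_iff]⟩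
  have m4 : ![0, (Nat.card A : ℤ)] ∈ H := (mem _ _).2 ⟨1, by simp [Prod.ext_iff]⟩
  rw [← hidx]
  refine ⟨index_dvd_natAbs_det H m1 m2, ?_, ?_, ?_, ?_, ?_⟩
  · simpa [mul_comm] using index_dvd_natAbs_det H m1 m4
  · simpa using index_dvd_natAbs_det H m3 m1
  · simpa [mul_comm] using index_dvd_natAbs_det H m2 m4
  · simpa using index_dvd_natAbs_det H m3 m2
  · simpa using index_dvd_natAbs_det H m3 m4

theorem card_ker_dvd_gcd {A : Type*} [CommGroup A] [Finite A] [IsCyclic A]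
    {b11 b12 b21 b22 m d e f : ℤ} (hm : m = Nat.card A)
    (hd : d = Int.gcd b11 (Int.gcd b12 m)) (he : e = Int.gcd b21 (Int.gcd b22 m))
    (hf : f = Int.gcd (b11 - b21) (Int.gcd (b12 - b22) m)) :
    (Nat.card (pairHom A b11 b21 b12 b22).ker : ℤ) ∣
      Int.gcd (m * (Int.gcd d (Int.gcd e f) : ℕ)) (b11 * b22 - b12 * b21) := by
  obtain ⟨h0, h1, h2, h3, h4, h5⟩ := card_ker_dvd (A := A) b11 b12 b21 b22
  rw [← hm] at h1 h2 h3 h4 h5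
  have key : ∀ {K x y : ℤ}, K ∣ m * x → K ∣ m * y → K ∣ m * (Int.gcd x y : ℤ) := by
    intro K x y hx hy
    rw [Int.gcd_eq_gcd_ab, mul_add, ← mul_assoc, ← mul_assoc]
    exact dvd_add (hx.mul_right _) (hy.mul_right _)
  refine Int.dvd_coe_gcd ?_ h0
  refine key ?_ (key ?_ ?_)
  · rw [hd]; exact key h1 (key h2 h5)
  · rw [he]; exact key h3 (key h4 h5)
  · rw [hf]
    refine key ?_ (key ?_ h5) <;> rw [mul_sub]
    exacts [dvd_sub h1 h3, dvd_sub h2 h4]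

/-! ### Character sums -/

section
variable {F : Type*} [Field F] [Fintype F]

noncomputable local instance : Fintype (MulChar F ℂ) := Fintype.ofFinite _

theorem card_mulChar : Nat.card (MulChar F ℂ) = Nat.card Fˣ :=
  MulChar.card_eq_card_units_of_hasEnoughRootsOfUnity F ℂ

theorem isCyclic_mulChar : IsCyclic (MulChar F ℂ) :=
  isCyclic_of_surjective _ (MulChar.mulEquiv_units F ℂ).some.symm.surjective

open Classical in
theorem sum_mulChar_apply (a : F) :
    ∑ χ : MulChar F ℂ, χ a = if a = 1 then (Nat.card Fˣ : ℂ) else 0 := by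
  split_ifs with h
  · subst h
    rw [← card_mulChar]
    simp
  · obtain ⟨ψ, hψ⟩ := MulChar.exists_apply_ne_one_of_hasEnoughRootsOfUnity F ℂ h
    have := Fintype.sum_equiv (Equiv.mulLeft ψ) (fun χ => ψ a * χ a) (fun χ => χ a)
      (fun χ => by simp)
    rw [← Finset.mul_sum] at this
    by_contra h0
    exact hψ (mul_right_cancel₀ h0 (by rw [this, one_mul]))

open Classical in
theorem sum_units_mulChar (χ : MulChar F ℂ) :
    ∑ x : Fˣ, χ x = if χ = 1 then (Nat.card Fˣ : ℂ) else 0 := by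
  split_ifs with h
  · subst h
    simp
  · obtain ⟨u, hu⟩ := MulChar.ne_one_iff.1 h
    have := Fintype.sum_equiv (Equiv.mulLeft u) (fun x => χ u * χ x) (fun x : Fˣ => χ x)
      (fun x => by simp)
    rw [← Finset.mul_sum] at this
    by_contra h0
    exact hu (mul_right_cancel₀ h0 (by rw [this, one_mul]))

open Classical in
/-- The values at `ρ ^ j` of the characters killed by `e` sum to `e` or `0`: such characters are
trivial on `e`-th powers, and one of them sends `ρ` to a primitive `e`-th root of unity. -/
theorem sum_torsion_mulChar {ρ : Fˣ} (hρ : ∀ x : Fˣ, x ∈ Subgroup.zpowers ρ) {e : ℕ}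
    (he : e ∣ Nat.card Fˣ) (j : ℤ) :
    ∑ χ : MulChar F ℂ, (if χ ^ e = 1 then χ (ρ ^ j : Fˣ) else 0) =
      if (e : ℤ) ∣ j then (e : ℂ) else 0 := by
  have e0 : e ≠ 0 := fun h => Nat.card_pos.ne' (Nat.eq_zero_of_zero_dvd (h ▸ he))
  split_ifs with h
  · obtain ⟨t, rfl⟩ := h
    have hval (χ : MulChar F ℂ) : (if χ ^ e = 1 then χ (ρ ^ ((e : ℤ) * t) : Fˣ) else 0) =
        if χ ^ e = 1 then 1 else 0 := by
      split_ifs with hχ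
      · rw [mul_comm, zpow_mul, zpow_natCast, Units.val_pow_eq_pow_val, map_pow,
          ← MulChar.pow_apply_coe, hχ, MulChar.one_apply_coe]
      · rfl
    have := isCyclic_mulChar (F := F)
    have hc := IsCyclic.card_powMonoidHom_ker (MulChar F ℂ) e
    rw [card_mulChar, Nat.gcd_eq_right he] at hc
    simp_rw [hval]
    rw [Finset.sum_boole, ← Fintype.card_subtype, ← Nat.card_eq_fintype_card]
    exact congrArg _ hc
  · have hζ := Complex.isPrimitiveRoot_exp e e0
    obtain ⟨ζ, hζ'⟩ := hζ.isUnit e0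
    rw [← hζ'] at hζ
    have hζ := IsPrimitiveRoot.coe_units_iff.1 hζ
    have hmem : ζ ∈ rootsOfUnity (Fintype.card Fˣ) ℂ := by
      rw [mem_rootsOfUnity, hζ.pow_eq_one_iff_dvd, ← Nat.card_eq_fintype_card]
      exact he
    set ψ := MulChar.ofRootOfUnity hmem hρ
    have hψ : ψ (ρ : F) = ζ := MulChar.ofRootOfUnity_spec hmem hρ
    have hψe : ψ ^ e = 1 := by
      rw [MulChar.eq_iff hρ, MulChar.pow_apply_coe, hψ, MulChar.one_apply_coe]
      rw [← Units.val_pow_eq_pow_val, hζ.pow_eq_one, Units.val_one]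
    have hψj : ψ (ρ ^ j : Fˣ) ≠ 1 := by
      rw [← MulChar.coe_toUnitHom, map_zpow]
      have : ψ.toUnitHom ρ = ζ := Units.ext (by rw [MulChar.coe_toUnitHom, hψ])
      rw [this, Ne, Units.val_eq_one, hζ.zpow_eq_one_iff_dvd]
      exact h
    have := Fintype.sum_equiv (Equiv.mulLeft ψ)
      (fun χ : MulChar F ℂ => ψ (ρ ^ j : Fˣ) * (if χ ^ e = 1 then χ (ρ ^ j : Fˣ) else 0))
      (fun χ => if χ ^ e = 1 then χ (ρ ^ j : Fˣ) else 0)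
      (fun χ => by simp [mul_pow, hψe])
    rw [← Finset.mul_sum] at this
    by_contra h0
    exact hψj (mul_right_cancel₀ h0 (by rw [this, one_mul]))

theorem norm_jacobiSum {χ ψ : MulChar F ℂ} (h1 : χ ≠ 1) (h2 : ψ ≠ 1) (h3 : χ * ψ ≠ 1) :
    ‖jacobiSum χ ψ‖ = Real.sqrt (Fintype.card F) := by
  have hchar : ringChar ℂ ≠ ringChar F := by
    rw [ringChar.eq_zero]
    exact fun h => CharP.ringChar_ne_zero_of_finite F h.symm
  have h := jacobiSum_mul_jacobiSum_inv hchar h1 h2 h3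
  have hs : jacobiSum χ⁻¹ ψ⁻¹ = star (jacobiSum χ ψ) := by
    simp only [jacobiSum, star_sum, star_mul', MulChar.star_apply']
  rw [hs, Complex.star_def, Complex.mul_conj, Complex.normSq_eq_norm_sq] at h
  symm
  rw [Real.sqrt_eq_iff_mul_self_eq (by positivity) (by positivity), ← sq]
  exact_mod_cast h.symm

open Classical in
/-- Expansion of the indicator of `P + Q = 1` in characters. Opening the Jacobi sum, orthogonality
leaves only the term `a = P`, `1 - a = Q`. -/
theorem indicator_eq (P Q : Fˣ) :
    ∑ z : MulChar F ℂ × MulChar F ℂ, z.1⁻¹ P * z.2⁻¹ Q * jacobiSum z.1 z.2 =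
      (Nat.card Fˣ : ℂ) ^ 2 * if (P : F) + Q = 1 then 1 else 0 := by
  have h1 : ∀ z : MulChar F ℂ × MulChar F ℂ, z.1⁻¹ (P : F) * z.2⁻¹ (Q : F) * jacobiSum z.1 z.2 =
      ∑ a : F, z.1 ((P : F)⁻¹ * a) * z.2 ((Q : F)⁻¹ * (1 - a)) := by
    intro z
    rw [jacobiSum, Finset.mul_sum]
    refine Finset.sum_congr rfl fun a _ => ?_
    rw [map_mul, map_mul, MulChar.inv_apply', MulChar.inv_apply']
    ring
  simp_rw [h1]
  rw [Finset.sum_comm]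
  have h2 : ∀ a : F, ∑ z : MulChar F ℂ × MulChar F ℂ,
      z.1 ((P : F)⁻¹ * a) * z.2 ((Q : F)⁻¹ * (1 - a)) =
      if a = P then (if (P : F) + Q = 1 then (Nat.card Fˣ : ℂ) ^ 2 else 0) else 0 := by
    intro a
    rw [Fintype.sum_prod_type]
    dsimp only
    rw [← Finset.sum_mul_sum, sum_mulChar_apply, sum_mulChar_apply]
    have e1 : (P : F)⁻¹ * a = 1 ↔ a = P := by
      rw [inv_mul_eq_one₀ P.ne_zero, eq_comm]
    have e2 : (Q : F)⁻¹ * (1 - a) = 1 ↔ a + Q = 1 := by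
      rw [inv_mul_eq_one₀ Q.ne_zero, eq_sub_iff_add_eq, add_comm]
    simp only [e1, e2]
    split_ifs <;> simp_all [sq]
  simp_rw [h2]
  simp

theorem inv_apply_monomial {L : Type*} [Field L] (χ : MulChar L ℂ) (u x y : Lˣ) (a b : ℤ) :
    χ⁻¹ (u * x ^ a * y ^ b : Lˣ) = χ⁻¹ u * ((χ ^ a)⁻¹ x * (χ ^ b)⁻¹ y) := by
  have h (v : Lˣ) (n : ℤ) : (χ ^ n)⁻¹ (v : L) = χ⁻¹ (v ^ n : Lˣ) := by
    rw [← inv_zpow, MulChar.zpow_apply_coe, Units.val_zpow_eq_zpow_val]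
  rw [h, h]
  simp [mul_assoc]

open Classical in
theorem sum_monomials (χ ψ : MulChar F ℂ) (u v : Fˣ) (b11 b12 b21 b22 : ℤ) :
    ∑ w : Fˣ × Fˣ, χ⁻¹ (u * w.1 ^ b11 * w.2 ^ b12 : Fˣ) * ψ⁻¹ (v * w.1 ^ b21 * w.2 ^ b22 : Fˣ) =
      if (χ, ψ) ∈ (pairHom (MulChar F ℂ) b11 b21 b12 b22).ker then
        (Nat.card Fˣ : ℂ) ^ 2 * (χ⁻¹ u * ψ⁻¹ v) else 0 := by
  have h (w : Fˣ × Fˣ) :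
      χ⁻¹ (u * w.1 ^ b11 * w.2 ^ b12 : Fˣ) * ψ⁻¹ (v * w.1 ^ b21 * w.2 ^ b22 : Fˣ) =
      χ⁻¹ u * ψ⁻¹ v * ((χ ^ b11 * ψ ^ b21)⁻¹ w.1 * (χ ^ b12 * ψ ^ b22)⁻¹ w.2) := by
    rw [inv_apply_monomial, inv_apply_monomial, mul_inv (χ ^ b11), mul_inv (χ ^ b12),
      MulChar.mul_apply, MulChar.mul_apply]
    ring
  simp_rw [h]
  rw [← Finset.mul_sum, Fintype.sum_prod_type]
  dsimp only
  rw [← Finset.sum_mul_sum, sum_units_mulChar, sum_units_mulChar]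
  simp only [inv_eq_one, MonoidHom.mem_ker, pairHom, MonoidHom.coe_mk, OneHom.coe_mk,
    Prod.mk_eq_one]
  split_ifs <;> first | (exfalso; tauto) | ring

/-! ### The point count in terms of Jacobi sums -/

open Classical in
/-- The point count is a sum of Jacobi sums over the pairs `(χ, ψ)` of characters for which
`(x, y) ↦ χ (x ^ b11 * y ^ b12) * ψ (x ^ b21 * y ^ b22)` is trivial. -/
theorem card_curve (u v : Fˣ) (b11 b12 b21 b22 : ℤ) :
    (Nat.card {w : Fˣ × Fˣ // ((u * w.1 ^ b11 * w.2 ^ b12 : Fˣ) : F) +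
      (v * w.1 ^ b21 * w.2 ^ b22 : Fˣ) = 1} : ℂ) =
    ∑ z : MulChar F ℂ × MulChar F ℂ,
      if z ∈ (pairHom (MulChar F ℂ) b11 b21 b12 b22).ker then
        z.1⁻¹ u * z.2⁻¹ v * jacobiSum z.1 z.2 else 0 := by
  have hm : (Nat.card Fˣ : ℂ) ^ 2 ≠ 0 := pow_ne_zero _ (Nat.cast_ne_zero.2 Nat.card_pos.ne')
  refine mul_left_cancel₀ hm ?_
  rw [Nat.card_eq_fintype_card (α := {w : Fˣ × Fˣ // _}), Fintype.card_subtype, ← Finset.sum_boole, Finset.mul_sum]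
  simp_rw [← indicator_eq]
  rw [Finset.sum_comm, Finset.mul_sum]
  refine Finset.sum_congr rfl fun z _ => ?_
  rw [← Finset.sum_mul, sum_monomials]
  simp only [Prod.mk.eta]
  split_ifs <;> ring

open Classical in
/-- The Jacobi sum of `χ` and `ψ` if none of `χ`, `ψ`, `χ * ψ` is trivial, and `0` otherwise. -/
noncomputable def genericJacobi (χ ψ : MulChar F ℂ) : ℂ :=
  if χ ≠ 1 ∧ ψ ≠ 1 ∧ χ * ψ ≠ 1 then jacobiSum χ ψ else 0

theorem norm_genericJacobi_le (χ ψ : MulChar F ℂ) :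
    ‖genericJacobi χ ψ‖ ≤ Real.sqrt (Fintype.card F) := by
  unfold genericJacobi
  split_ifs with h
  · exact (norm_jacobiSum h.1 h.2.1 h.2.2).le
  · simp

open Classical in
/-- The three degenerate cases at once. For `χ = ψ = 1` all correction terms are present and give
`(q + 1) - 1 - 1 - 1 = q - 2`. -/
theorem jacobiSum_eq_generic (χ ψ : MulChar F ℂ) :
    jacobiSum χ ψ = genericJacobi χ ψ
      + (if χ = 1 then if ψ = 1 then (Fintype.card F : ℂ) + 1 else 0 else 0)
      - (if χ = 1 then 1 else 0) - (if ψ = 1 then 1 else 0)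
      - (if ψ = χ⁻¹ then χ (-1) else 0) := by
  unfold genericJacobi
  by_cases h1 : χ = 1
  · subst h1
    by_cases h2 : ψ = 1
    · subst h2
      simp [jacobiSum_one_one, MulChar.one_apply isUnit_one.neg]
      ring
    · simp [h2, jacobiSum_one_nontrivial h2]
  · by_cases h2 : ψ = 1
    · subst h2
      have : (1 : MulChar F ℂ) ≠ χ⁻¹ := by simpa [eq_comm] using h1
      simp [h1, jacobiSum_comm χ 1, jacobiSum_one_nontrivial h1, this]
    · by_cases h3 : ψ = χ⁻¹
      · subst h3
        simp [h1, jacobiSum_nontrivial_inv h1]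
      · have : χ * ψ ≠ 1 := fun h => h3 (eq_inv_of_mul_eq_one_right h)
        simp [h1, h2, h3, this]

theorem zpow_and_zpow_eq_one_iff {A : Type*} [CommGroup A] [Finite A] (χ : A) (a b m : ℤ)
    (hm : m = Nat.card A) :
    (χ ^ a = 1 ∧ χ ^ b = 1) ↔ χ ^ (Int.gcd a (Int.gcd b m)) = 1 := by
  have h : (orderOf χ : ℤ) ∣ m := by rw [hm]; exact_mod_cast orderOf_dvd_natCard χ
  rw [← orderOf_dvd_iff_zpow_eq_one, ← orderOf_dvd_iff_zpow_eq_one, ← orderOf_dvd_iff_pow_eq_one,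
    ← Int.natCast_dvd_natCast, Int.dvd_coe_gcd_iff, Int.dvd_coe_gcd_iff]
  tauto

open Classical in
/-- The sums of character values that produce the terms `D_d(i)`, `D_e(j)` and
`D_f(i - j + w)`. -/
theorem sum_common_torsion {ρ : Fˣ} (hρ : ∀ x : Fˣ, x ∈ Subgroup.zpowers ρ) {a b m : ℤ}
    (hm : m = Nat.card Fˣ) (j : ℤ) :
    ∑ χ : MulChar F ℂ, (if χ ^ a = 1 ∧ χ ^ b = 1 then χ⁻¹ (ρ ^ j : Fˣ) else 0) =
      if (Int.gcd a (Int.gcd b m) : ℤ) ∣ j then (Int.gcd a (Int.gcd b m) : ℂ) else 0 := by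
  have hdvd : Int.gcd a (Int.gcd b m) ∣ Nat.card Fˣ := by
    have : (Int.gcd a (Int.gcd b m) : ℤ) ∣ m :=
      (Int.gcd_dvd_right _ _).trans (Int.gcd_dvd_right _ _)
    rw [hm] at this ⊢
    exact_mod_cast this
  have h := sum_torsion_mulChar hρ hdvd (-j)
  simp only [dvd_neg] at h
  rw [← h]
  refine Finset.sum_congr rfl fun χ _ => ?_
  simp only [zpow_and_zpow_eq_one_iff χ a b m (by rw [hm, card_mulChar]), MulChar.inv_apply',
    zpow_neg, Units.val_inv_eq_inv_val]

open Classical in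
/-- The quantity `N_{ij}` is the sum of the nondegenerate Jacobi sums. -/
theorem card_curve_eq {ρ : Fˣ} (hρ : ∀ x : Fˣ, x ∈ Subgroup.zpowers ρ) {w m : ℤ}
    (hw : ((ρ ^ w : Fˣ) : F) = -1) (hm : m = Nat.card Fˣ) (b11 b12 b21 b22 i j : ℤ)
    {d e f : ℕ} (hd : d = Int.gcd b11 (Int.gcd b12 m)) (he : e = Int.gcd b21 (Int.gcd b22 m))
    (hf : f = Int.gcd (b11 - b21) (Int.gcd (b12 - b22) m)) :
    (Nat.card {w : Fˣ × Fˣ // ((ρ ^ i * w.1 ^ b11 * w.2 ^ b12 : Fˣ) : F) +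
      (ρ ^ j * w.1 ^ b21 * w.2 ^ b22 : Fˣ) = 1} : ℂ) - (Fintype.card F + 1)
      + (if (d : ℤ) ∣ i then (d : ℂ) else 0) + (if (e : ℤ) ∣ j then (e : ℂ) else 0)
      + (if (f : ℤ) ∣ i - j + w then (f : ℂ) else 0) =
    ∑ z : MulChar F ℂ × MulChar F ℂ,
      if z ∈ (pairHom (MulChar F ℂ) b11 b21 b12 b22).ker then
        z.1⁻¹ (ρ ^ i : Fˣ) * z.2⁻¹ (ρ ^ j : Fˣ) * genericJacobi z.1 z.2 else 0 := by
  rw [card_curve, hd, he, hf, ← sum_common_torsion hρ hm, ← sum_common_torsion hρ hm,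
    ← sum_common_torsion hρ hm]
  -- Every term is written as a sum over all pairs `(χ, ψ)`, so that it suffices to compare summands.
  have h0 : (Fintype.card F : ℂ) + 1 = ∑ χ : MulChar F ℂ, ∑ ψ : MulChar F ℂ,
      if χ = 1 then if ψ = 1 then (Fintype.card F : ℂ) + 1 else 0 else 0 := by simp
  have h1 : ∑ χ : MulChar F ℂ, (if χ ^ b11 = 1 ∧ χ ^ b12 = 1 then χ⁻¹ (ρ ^ i : Fˣ) else 0) =
      ∑ χ : MulChar F ℂ, ∑ ψ : MulChar F ℂ, if ψ = 1 then
        (if χ ^ b11 = 1 ∧ χ ^ b12 = 1 then χ⁻¹ (ρ ^ i : Fˣ) else 0) else 0 := by simp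
  have h2 : ∑ ψ : MulChar F ℂ, (if ψ ^ b21 = 1 ∧ ψ ^ b22 = 1 then ψ⁻¹ (ρ ^ j : Fˣ) else 0) =
      ∑ χ : MulChar F ℂ, ∑ ψ : MulChar F ℂ, if χ = 1 then
        (if ψ ^ b21 = 1 ∧ ψ ^ b22 = 1 then ψ⁻¹ (ρ ^ j : Fˣ) else 0) else 0 := by
    rw [Finset.sum_comm]; simp
  have h3 : ∑ χ : MulChar F ℂ, (if χ ^ (b11 - b21) = 1 ∧ χ ^ (b12 - b22) = 1 then
        χ⁻¹ (ρ ^ (i - j + w) : Fˣ) else 0) =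
      ∑ χ : MulChar F ℂ, ∑ ψ : MulChar F ℂ, if ψ = χ⁻¹ then
        (if χ ^ (b11 - b21) = 1 ∧ χ ^ (b12 - b22) = 1 then
        χ⁻¹ (ρ ^ (i - j + w) : Fˣ) else 0) else 0 := by simp
  rw [h1, h2, h3, h0, Fintype.sum_prod_type, Fintype.sum_prod_type]
  simp only [← Finset.sum_sub_distrib, ← Finset.sum_add_distrib]
  refine Finset.sum_congr rfl fun χ _ => Finset.sum_congr rfl fun ψ _ => ?_
  rw [jacobiSum_eq_generic]
  have hker : (χ, ψ) ∈ (pairHom (MulChar F ℂ) b11 b21 b12 b22).ker ↔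
      χ ^ b11 * ψ ^ b21 = 1 ∧ χ ^ b12 * ψ ^ b22 = 1 := by
    simp [MonoidHom.mem_ker, pairHom]
  simp only [hker]
  by_cases h3 : ψ = χ⁻¹
  · subst h3
    -- `ρ ^ w = -1` is its own inverse, so `χ⁻¹` and `χ` agree on it.
    have hval : χ⁻¹ (ρ ^ (i - j + w) : Fˣ) =
        χ⁻¹ (ρ ^ i : Fˣ) * χ⁻¹⁻¹ (ρ ^ j : Fˣ) * χ (-1) := by
      rw [zpow_add, zpow_sub, MulChar.inv_apply' χ⁻¹, Units.val_mul, hw, Units.val_mul, map_mul,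
        map_mul, MulChar.inv_apply' χ (-1), inv_neg_one, Units.val_inv_eq_inv_val]
    rw [hval]
    simp only [inv_zpow, ← zpow_neg, ← zpow_add, sub_eq_add_neg]
    by_cases h1 : χ = 1
    · subst h1
      simp [-Units.val_zpow_eq_zpow_val, MulChar.one_apply isUnit_one.neg]
      ring
    · simp [h1]
      split_ifs <;> ring
  · by_cases h1 : χ = 1
    · subst h1
      have h2 : ψ ≠ 1 := by simpa using h3
      simp [h2, -Units.val_zpow_eq_zpow_val]
      split_ifs <;> ring
    · by_cases h2 : ψ = 1
      · subst h2
        simp [h1, h3, -Units.val_zpow_eq_zpow_val]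
        split_ifs <;> ring
      · simp [h1, h2, h3]

open Classical in
theorem norm_generic_sum_le (K : Subgroup (MulChar F ℂ × MulChar F ℂ)) (u v : Fˣ) :
    ‖∑ z : MulChar F ℂ × MulChar F ℂ,
      if z ∈ K then z.1⁻¹ u * z.2⁻¹ v * genericJacobi z.1 z.2 else 0‖ ≤
      Nat.card K * Real.sqrt (Fintype.card F) := by
  have hone (χ : MulChar F ℂ) (u : Fˣ) : ‖χ u‖ = 1 := by
    have := Complex.norm_eq_one_of_mem_rootsOfUnity (χ.apply_mem_rootsOfUnity u)
    rwa [MulChar.coe_equivToUnitHom] at this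
  rw [← Finset.sum_filter]
  refine (norm_sum_le_of_le (n := fun _ => Real.sqrt (Fintype.card F)) _ fun z _ => ?_).trans ?_
  · rw [norm_mul, norm_mul, hone, hone, one_mul, one_mul]
    exact norm_genericJacobi_le _ _
  · rw [Finset.sum_const, nsmul_eq_mul, ← Fintype.card_subtype, ← Nat.card_eq_fintype_card]

theorem generator_zpow_eq_neg_one {ρ : Fˣ} (hρ : ∀ x : Fˣ, x ∈ Subgroup.zpowers ρ) :
    ((ρ ^ (if Even (Fintype.card F) then (0 : ℤ) else ((Fintype.card F : ℤ) - 1) / 2) : Fˣ) : F)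
      = -1 := by
  split_ifs with h
  · have : ringChar F = 2 := (FiniteField.even_card_iff_char_two).2 (Nat.even_iff.1 h)
    have := ringChar.of_eq this
    simp [CharTwo.neg_eq]
  · rw [Nat.not_even_iff_odd] at h
    obtain ⟨t, ht⟩ := h
    have h1 : ((Fintype.card F : ℤ) - 1) / 2 = (t : ℤ) := by omega
    have hord : orderOf ρ = 2 * t := by
      have h2 := orderOf_eq_card_of_forall_mem_zpowers hρ
      rw [Nat.card_units, Nat.card_eq_fintype_card] at h2
      omega
    have ht0 : 0 < t := by have := Fintype.one_lt_card (α := F); omega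
    rw [h1, zpow_natCast]
    have hsq : ((ρ ^ t : Fˣ) : F) ^ 2 = 1 := by
      rw [← Units.val_pow_eq_pow_val, ← pow_mul, mul_comm, ← hord, pow_orderOf_eq_one,
        Units.val_one]
    refine (eq_or_eq_neg_of_sq_eq_sq _ 1 (by rw [hsq, one_pow])).resolve_left fun h => ?_
    have h2 := orderOf_dvd_of_pow_eq_one (Units.val_eq_one.1 h)
    rw [hord] at h2
    have := Nat.le_of_dvd ht0 h2
    omega

end

/-! ### The bound -/

/-- The bound |N_{ij}| ≤ k·√q. -/
theorem trinomial_bound_k {p n q : ℕ} (hp : p.Prime) (hn : 0 < n) (hq : q = p ^ n)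
    {F : Type*} [Field F] [Fintype F] (hF : Fintype.card F = q)
    (ρ : Fˣ) (hρ : ∀ x : Fˣ, x ∈ Subgroup.zpowers ρ)
    (a11 a12 a21 a22 a31 a32 : ℕ)
    (b11 b12 b21 b22 : ℤ)
    (hb11 : b11 = (a11 : ℤ) - (a31 : ℤ)) (hb12 : b12 = (a12 : ℤ) - (a32 : ℤ))
    (hb21 : b21 = (a21 : ℤ) - (a31 : ℤ)) (hb22 : b22 = (a22 : ℤ) - (a32 : ℤ))
    (hdet : b11 * b22 - b12 * b21 ≠ 0)
    (d e f k w : ℤ)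
    (hd : d = Int.gcd b11 (Int.gcd b12 ((q : ℤ) - 1)))
    (he : e = Int.gcd b21 (Int.gcd b22 ((q : ℤ) - 1)))
    (hf : f = Int.gcd (b11 - b21) (Int.gcd (b12 - b22) ((q : ℤ) - 1)))
    (hk : k = Int.gcd (((q : ℤ) - 1) * (Int.gcd d (Int.gcd e f) : ℕ))
      (b11 * b22 - b12 * b21))
    (hw : w = if Even q then 0 else ((q : ℤ) - 1) / 2)
    (D : ℤ → ℤ → ℤ) (hD : ∀ ℓ i : ℤ, D ℓ i = if ℓ ∣ i then ℓ else 0)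
    (C : ℤ → ℤ → ℕ)
    (hC : ∀ i j : ℤ, C i j = Nat.card {xy : Fˣ × Fˣ //
      ((ρ ^ i : Fˣ) : F) * (xy.1 : F) ^ a11 * (xy.2 : F) ^ a12
        + ((ρ ^ j : Fˣ) : F) * (xy.1 : F) ^ a21 * (xy.2 : F) ^ a22
        = (xy.1 : F) ^ a31 * (xy.2 : F) ^ a32})
    (N : ℤ → ℤ → ℤ)
    (hN : ∀ i j : ℤ, N i j = (C i j : ℤ) - ((q : ℤ) + 1) + D d i + D e j + D f (i - j + w)) :
    ∀ i j : ℤ, (|N i j| : ℝ) ≤ (k : ℝ) * Real.sqrt q := by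
  classical
  intro i j
  subst hF
  have hm : (Fintype.card F : ℤ) - 1 = Nat.card Fˣ := by
    rw [Nat.card_units, Nat.card_eq_fintype_card, Nat.cast_sub Fintype.card_pos, Nat.cast_one]
  have hρw : ((ρ ^ w : Fˣ) : F) = -1 := hw ▸ generator_zpow_eq_neg_one hρ
  -- Dividing by `x ^ a31 * y ^ a32` turns the curve into a two-term monomial equation.
  have hcurve : C i j = Nat.card {z : Fˣ × Fˣ // ((ρ ^ i * z.1 ^ b11 * z.2 ^ b12 : Fˣ) : F) +
      (ρ ^ j * z.1 ^ b21 * z.2 ^ b22 : Fˣ) = 1} := by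
    rw [hC]
    refine Nat.card_congr (Equiv.subtypeEquivRight fun z => ?_)
    have hpow (x : Fˣ) {a c : ℕ} {b : ℤ} (hb : b = (a : ℤ) - c) :
        (x : F) ^ a = ((x ^ b : Fˣ) : F) * (x : F) ^ c := by
      rw [← Units.val_pow_eq_pow_val, ← Units.val_pow_eq_pow_val, ← Units.val_mul,
        ← zpow_natCast, ← zpow_natCast, ← zpow_add, hb, sub_add_cancel]
    have hne : (z.1 : F) ^ a31 * (z.2 : F) ^ a32 ≠ 0 :=
      mul_ne_zero (pow_ne_zero _ z.1.ne_zero) (pow_ne_zero _ z.2.ne_zero)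
    rw [hpow z.1 hb11, hpow z.2 hb12, hpow z.1 hb21, hpow z.2 hb22, ← mul_eq_right₀ hne]
    simp only [Units.val_mul]
    ring_nf
  have hmain := card_curve_eq hρ hρw hm b11 b12 b21 b22 i j rfl rfl rfl
  rw [← hcurve] at hmain
  have hbound : |(N i j : ℝ)| ≤ Nat.card (pairHom (MulChar F ℂ) b11 b21 b12 b22).ker *
      Real.sqrt (Fintype.card F) := by
    rw [← Complex.norm_intCast, hN, hD, hD, hD, hd, he, hf]
    push_cast
    rw [hmain]
    convert norm_generic_sum_le (pairHom (MulChar F ℂ) b11 b21 b12 b22).ker (ρ ^ i) (ρ ^ j)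
  have := isCyclic_mulChar (F := F)
  have hdvd := card_ker_dvd_gcd (A := MulChar F ℂ) (hm.trans (by rw [card_mulChar])) hd he hf
  have hle : (Nat.card (pairHom (MulChar F ℂ) b11 b21 b12 b22).ker : ℤ) ≤ k := by
    rw [hk]
    refine Int.le_of_dvd ?_ hdvd
    exact_mod_cast Int.gcd_pos_of_ne_zero_right _ hdet
  have hle' : (Nat.card (pairHom (MulChar F ℂ) b11 b21 b12 b22).ker : ℝ) ≤ k := by
    exact_mod_cast hle
  refine le_trans ?_ (mul_le_mul_of_nonneg_right hle' (Real.sqrt_nonneg _))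
  exact_mod_cast hbound
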